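/- arXiv:1911.11475 — 4 statements merged into one kernel-verified Lean document; each statement's English description precedes it below -/
import Mathlib

section
/- Eigenfunctions of the closed quantum Black–Scholes generator: let U : ℝ → ℝ be smooth with U'(x) > 0 for all x, let λ ∈ ℝ, and define φ_λ(x) = U'(x)^{-1/2} · exp( (iλ/σ²) ∫₀ˣ U'(s)^{-1} ds ). Then φ_λ satisfies the eigenvalue equation −iσ² U'(x) φ_λ'(x) − i(σ²/2) U''(x) φ_λ(x) = λ φ_λ(x) for all x ∈ ℝ. -/
/-!
Put `v = U'`. The generator `φ ↦ -iσ² (v φ' + v' φ / 2)` is a first-order transport operator.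
The amplitude `v ^ (-1/2)` is annihilated by `v d/dx + v'/2`, and the phase
`exp (c ∫ v⁻¹)` is an eigenfunction of `v d/dx` with eigenvalue `c`, because `∫ v⁻¹` is the travel
time along `v`. Their product thus has eigenvalue `-iσ² c`, which equals `λ` for `c = iλ/σ²`.
-/

open Set

theorem hasDerivAt_intervalIntegral_of_isOpen_of_ordConnected {E : Type*} [NormedAddCommGroup E]
    [NormedSpace ℝ E] [CompleteSpace E] {f : ℝ → E} {J : Set ℝ} {a x : ℝ} (hJ : IsOpen J)
    (hJc : J.OrdConnected) (hf : ContinuousOn f J) (ha : a ∈ J) (hx : x ∈ J) :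
    HasDerivAt (fun y => ∫ s in a..y, f s) (f x) x :=
  intervalIntegral.integral_hasDerivAt_right
    (hf.mono (hJc.uIcc_subset ha hx)).intervalIntegrable
    (hf.stronglyMeasurableAtFilter hJ x hx) (hf.continuousAt (hJ.mem_nhds hx))

theorem hasDerivAt_rpow_mul_cexp {v τ : ℝ → ℝ} {v' x : ℝ} (r : ℝ) (c : ℂ)
    (hv : HasDerivAt v v' x) (hx : v x ≠ 0) (hτ : HasDerivAt τ (v x)⁻¹ x) :
    HasDerivAt (fun y => ((v y ^ r : ℝ) : ℂ) * Complex.exp (c * τ y))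
      ((c + r * v') / v x * (((v x ^ r : ℝ) : ℂ) * Complex.exp (c * τ x))) x := by
  have amplitude : HasDerivAt (fun y => ((v y ^ r : ℝ) : ℂ))
      ((v' * r * v x ^ (r - 1) : ℝ) : ℂ) x :=
    (hv.rpow_const (Or.inl hx)).ofReal_comp
  have phase : HasDerivAt (fun y => Complex.exp (c * τ y))
      (Complex.exp (c * τ x) * (c * ((v x)⁻¹ : ℝ))) x :=
    (hτ.ofReal_comp.const_mul c).cexp
  refine (amplitude.mul phase).congr_deriv ?_
  rw [Real.rpow_sub_one hx]
  push_cast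
  ring

theorem eigenfunctions_naive_cqbs_general {σ : ℂ} (hσ : σ ≠ 0) {U : ℝ → ℝ} {J : Set ℝ}
    (hJ : IsOpen J) (hJc : J.OrdConnected) (hU : DifferentiableOn ℝ (deriv U) J)
    (hU' : ∀ y ∈ J, 0 < deriv U y) (lam : ℂ) {a : ℝ} (ha : a ∈ J) {φ : ℝ → ℂ}
    (hφ : ∀ y ∈ J,
      φ y = (Complex.ofReal ((deriv U y) ^ (-(1 / 2 : ℝ)))) *
        Complex.exp ((Complex.I * lam / σ ^ 2) *
          Complex.ofReal (∫ s in a..y, (deriv U s)⁻¹)))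
    {x : ℝ} (hx : x ∈ J) :
    -Complex.I * σ ^ 2 * Complex.ofReal (deriv U x) * deriv φ x
        - Complex.I * (σ ^ 2 / 2) * Complex.ofReal (deriv (deriv U) x) * φ x
      = lam * φ x := by
  have hUx : deriv U x ≠ 0 := (hU' x hx).ne'
  have hτ : HasDerivAt (fun y => ∫ s in a..y, (deriv U s)⁻¹) (deriv U x)⁻¹ x :=
    hasDerivAt_intervalIntegral_of_isOpen_of_ordConnected hJ hJc
      (hU.continuousOn.inv₀ fun y hy => (hU' y hy).ne') ha hx
  have hφx : deriv φ x = (Complex.I * lam / σ ^ 2 + (-(1 / 2) : ℝ) * deriv (deriv U) x)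
      / deriv U x * φ x := by
    rw [hφ x hx]
    exact ((hasDerivAt_rpow_mul_cexp _ _ (hU.hasDerivAt (hJ.mem_nhds hx)) hUx
      hτ).congr_of_eventuallyEq (Filter.eventually_of_mem (hJ.mem_nhds hx) hφ)).deriv
  have hUx_complex : Complex.ofReal (deriv U x) ≠ 0 := Complex.ofReal_ne_zero.mpr hUx
  calc
    _ = -Complex.I ^ 2 * lam * φ x := by
      rw [hφx]
      push_cast
      field_simp
      ring
    _ = lam * φ x := by rw [Complex.I_sq, neg_neg, one_mul]

/-- Eigenfunctions of the closed quantum Black–Scholes generator: for smooth `U` with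
`U' > 0` and `λ ∈ ℝ`, the function `φ_λ(x) = U'(x)^{-1/2} exp((iλ/σ²) ∫₀ˣ U'(s)⁻¹ ds)`
satisfies `−iσ² U'(x) φ_λ'(x) − i(σ²/2) U''(x) φ_λ(x) = λ φ_λ(x)` for all `x`. -/
theorem eigenfunctions_naive_cqbs
    (σ : ℝ) (hσ : 0 < σ)
    (U : ℝ → ℝ) (hU : ContDiff ℝ (⊤ : ℕ∞) U) (hU' : ∀ x : ℝ, 0 < deriv U x)
    (lam : ℝ) (φ : ℝ → ℂ)
    (hφ : ∀ x : ℝ,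
      φ x = (Complex.ofReal ((deriv U x) ^ (-(1 / 2 : ℝ)))) *
        Complex.exp ((Complex.I * lam / (σ ^ 2 : ℂ)) *
          Complex.ofReal (∫ s in (0 : ℝ)..x, (deriv U s)⁻¹)))
    (x : ℝ) :
    -Complex.I * (σ ^ 2 : ℂ) * (Complex.ofReal (deriv U x)) * deriv φ x
        - Complex.I * (σ ^ 2 / 2 : ℂ) * (Complex.ofReal (deriv (deriv U) x)) * φ x
      = (lam : ℂ) * φ x :=
  eigenfunctions_naive_cqbs_general (Complex.ofReal_ne_zero.mpr hσ.ne') isOpen_univ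
    ordConnected_univ (contDiff_infty.mp hU 2).differentiable_deriv_two.differentiableOn
    (fun y _ => hU' y) lam (mem_univ 0) (fun y _ => hφ y) (mem_univ x)
end

section
/- Under the Riemannian metric g = U', the closed quantum Black–Scholes generator is a conjugated momentum operator: for every smooth ψ : ℝ → ℂ, i[Ĥ_g, M_U]ψ = −iσ² g^{-1/2} · (g^{1/2} ψ)'; explicitly, −i(σ²/(2g))(U''ψ + 2U'ψ') = −iσ² g(x)^{-1/2} d/dx( g(x)^{1/2} ψ(x) ). -/
/-!
By the Leibniz rule, the commutator of `d²/dx²` with multiplication by `U` is the operator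
`ψ ↦ U''ψ + 2U'ψ'`, so with `g = U'` it equals `g'ψ + 2gψ'`. Since `(g^{1/2})' = g'/(2g^{1/2})`, the
integrating factor `g^{1/2}` absorbs the zeroth-order term: `g'ψ + 2gψ' = 2g^{1/2}(g^{1/2}ψ)'`.
-/

section Commutator

variable {𝕜 𝔸 E : Type*} [NontriviallyNormedField 𝕜] [NormedRing 𝔸] [NormedAlgebra 𝕜 𝔸]
  [NormedAddCommGroup E] [NormedSpace 𝕜 E] [Module 𝔸 E] [IsBoundedSMul 𝔸 E] [IsScalarTower 𝕜 𝔸 E]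
  {u : 𝕜 → 𝔸} {ψ : 𝕜 → E} {x : 𝕜}

theorem deriv_deriv_fun_smul (hu : ContDiffAt 𝕜 2 u x) (hψ : ContDiffAt 𝕜 2 ψ x) :
    deriv (deriv fun y ↦ u y • ψ y) x =
      u x • deriv (deriv ψ) x + (2 : 𝔸) • deriv u x • deriv ψ x + deriv (deriv u) x • ψ x := by
  have leibniz := iteratedDerivWithin_smul (n := 2) (Set.mem_univ x) uniqueDiffOn_univ
    hu.contDiffWithinAt hψ.contDiffWithinAt
  simpa [Finset.sum_range_succ, iteratedDerivWithin_univ, iteratedDeriv_succ, ofNat_smul_eq_nsmul,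
    Pi.smul_def'] using leibniz

theorem deriv_deriv_fun_smul_sub_smul_deriv_deriv
    (hu : ContDiffAt 𝕜 2 u x) (hψ : ContDiffAt 𝕜 2 ψ x) :
    deriv (deriv fun y ↦ u y • ψ y) x - u x • deriv (deriv ψ) x =
      deriv (deriv u) x • ψ x + (2 * deriv u x) • deriv ψ x := by
  rw [deriv_deriv_fun_smul hu hψ, mul_smul]
  abel

end Commutator

theorem two_mul_sqrt_smul_deriv_sqrt_smul {E : Type*} [NormedAddCommGroup E] [NormedSpace ℝ E]
    {g : ℝ → ℝ} {ψ : ℝ → E} {x : ℝ} (hg : DifferentiableAt ℝ g x) (hψ : DifferentiableAt ℝ ψ x)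
    (hgx : 0 < g x) :
    (2 * √(g x)) • deriv (fun y ↦ √(g y) • ψ y) x = deriv g x • ψ x + (2 * g x) • deriv ψ x := by
  have hs : √(g x) ≠ 0 := (Real.sqrt_pos.2 hgx).ne'
  have hzeroth : 2 * √(g x) * (deriv g x / (2 * √(g x))) = deriv g x := by field_simp
  have hfirst : 2 * √(g x) * √(g x) = 2 * g x := by rw [mul_assoc, Real.mul_self_sqrt hgx.le]
  rw [deriv_fun_smul (hg.sqrt hgx.ne') hψ, deriv_sqrt hg hgx.ne', smul_add, smul_smul, smul_smul,
    hzeroth, hfirst, add_comm]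

theorem cqbs_generator_geometric_form_general {E : Type*} [NormedAddCommGroup E] [NormedSpace ℂ E]
    (σ : ℝ) {U g : ℝ → ℝ} {ψ : ℝ → E} {x : ℝ} (hU : ContDiffAt ℝ 2 U x) (hg : g = deriv U)
    (hgx : 0 < g x) (Hg : (ℝ → E) → ℝ → E)
    (hHg : ∀ (f : ℝ → E) (y : ℝ), Hg f y = -((σ ^ 2 / (2 * g y) : ℝ) : ℂ) • deriv (deriv f) y)
    (hψ : ContDiffAt ℝ 2 ψ x) :
    Complex.I • (Hg (fun y ↦ (U y : ℂ) • ψ y) x - (U x : ℂ) • Hg ψ x) =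
        (-Complex.I * ((σ ^ 2 / (2 * g x) : ℝ) : ℂ)) •
          (((deriv (deriv U) x : ℝ) : ℂ) • ψ x + (2 * ((deriv U x : ℝ) : ℂ)) • deriv ψ x) ∧
      (-Complex.I * ((σ ^ 2 / (2 * g x) : ℝ) : ℂ)) •
          (((deriv (deriv U) x : ℝ) : ℂ) • ψ x + (2 * ((deriv U x : ℝ) : ℂ)) • deriv ψ x) =
        (-Complex.I * (σ ^ 2 : ℂ) * ((√(g x) : ℝ) : ℂ)⁻¹) •
          deriv (fun y ↦ ((√(g y) : ℝ) : ℂ) • ψ y) x := by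
  have commutator : deriv (deriv fun y ↦ (U y : ℂ) • ψ y) x - (U x : ℂ) • deriv (deriv ψ) x =
      ((deriv (deriv U) x : ℝ) : ℂ) • ψ x + (2 * ((deriv U x : ℝ) : ℂ)) • deriv ψ x := by
    exact_mod_cast deriv_deriv_fun_smul_sub_smul_deriv_deriv hU hψ
  have conjugation : (2 * (√(g x) : ℂ)) • deriv (fun y ↦ (√(g y) : ℂ) • ψ y) x =
      ((deriv (deriv U) x : ℝ) : ℂ) • ψ x + (2 * ((deriv U x : ℝ) : ℂ)) • deriv ψ x := by
    have hg' : DifferentiableAt ℝ g x :=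
      hg ▸ (hU.derivWithin (m := 1) le_rfl).differentiableAt one_ne_zero
    subst hg
    exact_mod_cast two_mul_sqrt_smul_deriv_sqrt_smul hg' (hψ.differentiableAt two_ne_zero) hgx
  constructor
  · rw [← commutator, hHg, hHg]
    module
  · rw [← conjugation, smul_smul]
    congr 1
    have hs : (√(g x) : ℂ) ≠ 0 := by exact_mod_cast (Real.sqrt_pos.2 hgx).ne'
    have hsq : (g x : ℂ) = (√(g x) : ℂ) ^ 2 := by exact_mod_cast (Real.sq_sqrt hgx.le).symm
    push_cast
    rw [hsq]
    field_simp

/-- Under the Riemannian metric `g = U'`, the closed quantum Black–Scholes generator is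
a conjugated momentum operator: with `(Ĥ_gψ)(x) = −(σ²/(2g(x)))ψ''(x)`, for every
smooth `ψ : ℝ → ℂ`, `i[Ĥ_g, M_U]ψ = −iσ² g^{-1/2} (g^{1/2} ψ)'`; explicitly
`−i(σ²/(2g))(U''ψ + 2U'ψ') = −iσ² g(x)^{-1/2} d/dx (g(x)^{1/2} ψ(x))`. -/
theorem cqbs_generator_geometric_form
    (σ : ℝ) (hσ : 0 < σ)
    (U : ℝ → ℝ) (hU : ContDiff ℝ (⊤ : ℕ∞) U)
    (g : ℝ → ℝ) (hg : g = deriv U) (hgpos : ∀ x : ℝ, 0 < g x)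
    (Hg : (ℝ → ℂ) → ℝ → ℂ)
    (hHg : ∀ (f : ℝ → ℂ) (x : ℝ),
      Hg f x = -(Complex.ofReal (σ ^ 2 / (2 * g x))) * deriv (deriv f) x)
    (ψ : ℝ → ℂ) (hψ : ContDiff ℝ (⊤ : ℕ∞) ψ) (x : ℝ) :
    Complex.I * (Hg (fun y => (U y : ℂ) * ψ y) x - (U x : ℂ) * Hg ψ x)
        = -Complex.I * (Complex.ofReal (σ ^ 2 / (2 * g x))) *
            (Complex.ofReal (deriv (deriv U) x) * ψ x
              + 2 * Complex.ofReal (deriv U x) * deriv ψ x) ∧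
      -Complex.I * (Complex.ofReal (σ ^ 2 / (2 * g x))) *
          (Complex.ofReal (deriv (deriv U) x) * ψ x
            + 2 * Complex.ofReal (deriv U x) * deriv ψ x)
        = -Complex.I * (σ ^ 2 : ℂ) * (Complex.ofReal (Real.sqrt (g x)))⁻¹ *
            deriv (fun y => Complex.ofReal (Real.sqrt (g y)) * ψ y) x :=
  cqbs_generator_geometric_form_general σ (hU.contDiffAt.of_le ENat.LEInfty.out) hg (hgpos x) Hg hHg
    (hψ.contDiffAt.of_le ENat.LEInfty.out)
end

section
/- Structure of the double commutator L²U = [Ĥ,[Ĥ,M_U]]: let a₂, a₁, a₀, U : ℝ → ℂ be smooth and define Ĥψ = a₂ψ'' + a₁ψ' + a₀ψ on smooth ψ : ℝ → ℂ. Then the third-order coefficient of [Ĥ,[Ĥ,M_U]] vanishes: there exist smooth functions c₁, c₀ : ℝ → ℂ such that for every smooth ψ, [Ĥ,[Ĥ,M_U]]ψ = (4a₂²U'' + 2a₂a₂'U')·ψ'' + c₁·ψ' + c₀·ψ; in particular the coefficient of ψ'' is 4a₂(x)²U''(x) + 2a₂(x)a₂'(x)U'(x). -/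
/-!
The statement is an identity in the algebra of differential operators over a commutative algebra
with a derivation `D`. Commuting `H = a₂D² + a₁D + a₀` with multiplication by `U` lowers the order
by one: `[H, M_U] = pD + q` with `p = 2a₂ D U`. In `[H, pD + q]` the two `D³` terms `a₂p` and `pa₂`
cancel, and the `D²` coefficient is `2a₂ D p - p D a₂`. Smooth functions form such an algebra,
so the remaining coefficients are smooth because they lie in it.
-/

section Algebraic

variable {R A : Type*} [CommSemiring R] [CommRing A] [Algebra R A] (D : Derivation R A A)

/-- The differential operator `a₂D² + a₁D + a₀` on an algebra with derivation `D`. First-order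
operators are the case `a₂ = 0`. -/
def secondOrderOp (a₂ a₁ a₀ : A) : Module.End R A :=
  a₂ • (D.toLinearMap ∘ₗ D.toLinearMap) + a₁ • D.toLinearMap + LinearMap.mulLeft R a₀

namespace secondOrderOp

theorem apply_eq (a₂ a₁ a₀ f : A) :
    secondOrderOp D a₂ a₁ a₀ f = a₂ * D (D f) + a₁ * D f + a₀ * f :=
  rfl

theorem lie_mulLeft (a₂ a₁ a₀ U : A) :
    ⁅secondOrderOp D a₂ a₁ a₀, LinearMap.mulLeft R U⁆ =
      secondOrderOp D 0 (2 * a₂ * D U) (a₂ * D (D U) + a₁ * D U) := by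
  ext f
  simp only [Ring.lie_def, LinearMap.sub_apply, Module.End.mul_apply, LinearMap.mulLeft_apply,
    apply_eq, D.leibniz, map_add, smul_eq_mul]
  ring

theorem lie_firstOrder (a₂ a₁ a₀ p q : A) :
    ⁅secondOrderOp D a₂ a₁ a₀, secondOrderOp D 0 p q⁆ =
      secondOrderOp D (2 * a₂ * D p - p * D a₂)
        (a₂ * D (D p) + a₁ * D p + 2 * a₂ * D q - p * D a₁)
        (a₂ * D (D q) + a₁ * D q - p * D a₀) := by
  ext f
  simp only [Ring.lie_def, LinearMap.sub_apply, Module.End.mul_apply, apply_eq, D.leibniz, map_add,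
    smul_eq_mul, zero_mul, zero_add]
  ring

theorem exists_lie_lie_mulLeft_eq (a₂ a₁ a₀ U : A) :
    ∃ c₁ c₀ : A, ⁅secondOrderOp D a₂ a₁ a₀, ⁅secondOrderOp D a₂ a₁ a₀, LinearMap.mulLeft R U⁆⁆ =
      secondOrderOp D (4 * a₂ ^ 2 * D (D U) + 2 * a₂ * D a₂ * D U) c₁ c₀ := by
  have coeff : 2 * a₂ * D (2 * a₂ * D U) - 2 * a₂ * D U * D a₂ =
      4 * a₂ ^ 2 * D (D U) + 2 * a₂ * D a₂ * D U := by
    simp only [two_mul, map_add, D.leibniz, smul_eq_mul]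
    ring
  rw [lie_mulLeft, lie_firstOrder, coeff]
  exact ⟨_, _, rfl⟩

end secondOrderOp

end Algebraic

section Smooth

variable (𝕜 𝔸 : Type*) [NontriviallyNormedField 𝕜] [NormedCommRing 𝔸] [NormedAlgebra 𝕜 𝔸]

/-- The algebra of smooth functions `𝕜 → 𝔸` under pointwise operations. -/
def smoothSubalgebra : Subalgebra 𝕜 (𝕜 → 𝔸) where
  carrier := {f | ContDiff 𝕜 (⊤ : ℕ∞) f}
  mul_mem' {f g} (hf : ContDiff 𝕜 (⊤ : ℕ∞) f) (hg : ContDiff 𝕜 (⊤ : ℕ∞) g) := hf.mul hg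
  add_mem' {f g} (hf : ContDiff 𝕜 (⊤ : ℕ∞) f) (hg : ContDiff 𝕜 (⊤ : ℕ∞) g) := hf.add hg
  algebraMap_mem' c := (contDiff_const : ContDiff 𝕜 (⊤ : ℕ∞) fun _ : 𝕜 => algebraMap 𝕜 𝔸 c)

namespace smoothSubalgebra

variable {𝕜 𝔸}

theorem mem_iff {f : 𝕜 → 𝔸} : f ∈ smoothSubalgebra 𝕜 𝔸 ↔ ContDiff 𝕜 (⊤ : ℕ∞) f :=
  Iff.rfl

theorem differentiable (f : smoothSubalgebra 𝕜 𝔸) : Differentiable 𝕜 (f : 𝕜 → 𝔸) :=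
  (contDiff_infty_iff_deriv.mp (mem_iff.mp f.2)).1

theorem deriv_mem (f : smoothSubalgebra 𝕜 𝔸) : deriv (f : 𝕜 → 𝔸) ∈ smoothSubalgebra 𝕜 𝔸 :=
  (contDiff_infty_iff_deriv.mp (mem_iff.mp f.2)).2

variable (𝕜 𝔸)

/-- Differentiation, as a derivation of the algebra of smooth functions. -/
noncomputable def derivation :
    Derivation 𝕜 (smoothSubalgebra 𝕜 𝔸) (smoothSubalgebra 𝕜 𝔸) :=
  Derivation.mk'
    { toFun f := ⟨deriv f, deriv_mem f⟩
      map_add' f g := Subtype.ext <| funext fun x =>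
        deriv_add (differentiable f x) (differentiable g x)
      map_smul' c f := Subtype.ext <| funext fun x =>
        deriv_const_smul c (differentiable f x) }
    fun f g => Subtype.ext <| funext fun x =>
      (deriv_mul (differentiable f x) (differentiable g x)).trans <| by
        simp [mul_comm, add_comm]

end smoothSubalgebra

end Smooth

theorem double_commutator_structure_general
    {𝕜 𝔸 : Type*} [NontriviallyNormedField 𝕜] [NormedCommRing 𝔸] [NormedAlgebra 𝕜 𝔸]
    (a₂ a₁ a₀ U : 𝕜 → 𝔸)
    (ha₂ : ContDiff 𝕜 (⊤ : ℕ∞) a₂) (ha₁ : ContDiff 𝕜 (⊤ : ℕ∞) a₁)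
    (ha₀ : ContDiff 𝕜 (⊤ : ℕ∞) a₀) (hU : ContDiff 𝕜 (⊤ : ℕ∞) U)
    (Hop : (𝕜 → 𝔸) → 𝕜 → 𝔸)
    (hHop : ∀ (f : 𝕜 → 𝔸) (x : 𝕜),
      Hop f x = a₂ x * deriv (deriv f) x + a₁ x * deriv f x + a₀ x * f x) :
    ∃ c₁ c₀ : 𝕜 → 𝔸, ContDiff 𝕜 (⊤ : ℕ∞) c₁ ∧ ContDiff 𝕜 (⊤ : ℕ∞) c₀ ∧
      ∀ (ψ : 𝕜 → 𝔸), ContDiff 𝕜 (⊤ : ℕ∞) ψ → ∀ x : 𝕜,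
        (Hop (fun y => Hop (fun z => U z * ψ z) y - U y * Hop ψ y) x
            - (Hop (fun y => U y * Hop ψ y) x - U x * Hop (Hop ψ) x))
          = (4 * a₂ x ^ 2 * deriv (deriv U) x + 2 * a₂ x * deriv a₂ x * deriv U x)
              * deriv (deriv ψ) x
            + c₁ x * deriv ψ x + c₀ x * ψ x := by
  rw [← smoothSubalgebra.mem_iff] at ha₂ ha₁ ha₀ hU
  lift a₂ to smoothSubalgebra 𝕜 𝔸 using ha₂
  lift a₁ to smoothSubalgebra 𝕜 𝔸 using ha₁
  lift a₀ to smoothSubalgebra 𝕜 𝔸 using ha₀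
  lift U to smoothSubalgebra 𝕜 𝔸 using hU
  let D := smoothSubalgebra.derivation 𝕜 𝔸
  let H := secondOrderOp D a₂ a₁ a₀
  let C := ⁅H, LinearMap.mulLeft 𝕜 U⁆
  have Hop_coe (f : smoothSubalgebra 𝕜 𝔸) : Hop f = H f := funext (hHop f)
  have commutator_coe (f : smoothSubalgebra 𝕜 𝔸) :
      (fun y => Hop (fun z => U.1 z * f.1 z) y - U.1 y * Hop f y) = C f := by
    rw [Hop_coe f]
    exact congrArg (· - (U * H f).1) (Hop_coe (U * f))
  obtain ⟨c₁, c₀, lie_lie_eq⟩ := secondOrderOp.exists_lie_lie_mulLeft_eq D a₂ a₁ a₀ U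
  refine ⟨c₁, c₀, c₁.2, c₀.2, fun ψ hψ x => ?_⟩
  rw [← smoothSubalgebra.mem_iff] at hψ
  lift ψ to smoothSubalgebra 𝕜 𝔸 using hψ
  calc
    _ = (H (C ψ)).1 x - (C (H ψ)).1 x := by
      rw [commutator_coe ψ, Hop_coe (C ψ), ← congrFun (commutator_coe (H ψ)) x, Hop_coe ψ]
    _ = _ := congrFun (congrArg Subtype.val (LinearMap.congr_fun lie_lie_eq ψ)) x

/-- Structure of the double commutator `[Ĥ,[Ĥ,M_U]]` for `Ĥψ = a₂ψ'' + a₁ψ' + a₀ψ`: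
the third-order coefficient vanishes, i.e. there exist smooth `c₁, c₀` such that for
every smooth `ψ`, `[Ĥ,[Ĥ,M_U]]ψ = (4a₂²U'' + 2a₂a₂'U')ψ'' + c₁ψ' + c₀ψ`; in particular
the coefficient of `ψ''` is `4a₂(x)²U''(x) + 2a₂(x)a₂'(x)U'(x)`. -/
theorem double_commutator_structure
    (a₂ a₁ a₀ U : ℝ → ℂ)
    (ha₂ : ContDiff ℝ (⊤ : ℕ∞) a₂) (ha₁ : ContDiff ℝ (⊤ : ℕ∞) a₁) (ha₀ : ContDiff ℝ (⊤ : ℕ∞) a₀)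
    (hU : ContDiff ℝ (⊤ : ℕ∞) U)
    (Hop : (ℝ → ℂ) → ℝ → ℂ)
    (hHop : ∀ (f : ℝ → ℂ) (x : ℝ),
      Hop f x = a₂ x * deriv (deriv f) x + a₁ x * deriv f x + a₀ x * f x) :
    ∃ c₁ c₀ : ℝ → ℂ, ContDiff ℝ (⊤ : ℕ∞) c₁ ∧ ContDiff ℝ (⊤ : ℕ∞) c₀ ∧
      ∀ (ψ : ℝ → ℂ), ContDiff ℝ (⊤ : ℕ∞) ψ → ∀ x : ℝ,
        (Hop (fun y => Hop (fun z => U z * ψ z) y - U y * Hop ψ y) x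
            - (Hop (fun y => U y * Hop ψ y) x - U x * Hop (Hop ψ) x))
          = (4 * a₂ x ^ 2 * deriv (deriv U) x + 2 * a₂ x * deriv a₂ x * deriv U x)
              * deriv (deriv ψ) x
            + c₁ x * deriv ψ x + c₀ x * ψ x :=
  double_commutator_structure_general a₂ a₁ a₀ U ha₂ ha₁ ha₀ hU Hop hHop
end

section
/- Sturm–Liouville form of the second-order eigenvalue problem: let U : ℝ → ℝ be smooth with U'(x) > 0 for all x, set Ĥψ = −(σ²/2)(U')^{-1}ψ'' and p = U''/U', and let λ ∈ ℂ. Then a smooth ψ : ℝ → ℂ satisfies the eigenvalue equation [Ĥ,[Ĥ,M_U]]ψ = λψ if and only if it satisfies the Sturm–Liouville equation (p·ψ')' + (1/2)p''·ψ − (2λ/σ⁴)·U'·ψ = 0. -/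
/-!
Put `w = c / u'` and `p = u'' / u'`, and let `H = w D²`. Since `w u' = c` and `w u'' = c p`, the
commutator of `H` with multiplication by `u` is the first-order operator `c (p + 2 D)`. Hence
`[H, [H, M_u]] = c ([H, M_p] + 2 [H, D])`. Here `[H, M_p] = w (p'' + 2 p' D)`, and
`[H, D] = -w' D² = w p D²` because `w' = -w p`. The two contributions add up to
`c w (p'' + 2 D p D)`, and dividing the eigenvalue equation by `2 c w` gives the Sturm–Liouville
equation.
-/

section WeightedSecondDeriv

variable {𝕜 𝔸 : Type*} [NontriviallyNormedField 𝕜] [NormedCommRing 𝔸] [NormedAlgebra 𝕜 𝔸]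

/-- The commutator `[S, T] = S T - T S` of two operators on functions `𝕜 → 𝔸`. The operators are
arbitrary maps, because `deriv` is only additive on differentiable functions. -/
def operatorCommutator (S T : (𝕜 → 𝔸) → 𝕜 → 𝔸) (f : 𝕜 → 𝔸) : 𝕜 → 𝔸 :=
  S (T f) - T (S f)

/-- The second-order differential operator `w D²`. The operator `Ĥ` of the eigenvalue problem is
the case `w = -(σ² / 2) / U'`. -/
noncomputable def weightedSecondDeriv (w f : 𝕜 → 𝔸) (x : 𝕜) : 𝔸 :=
  w x * deriv (deriv f) x

theorem deriv_deriv_mul {f g : 𝕜 → 𝔸} {x : 𝕜} (hf : ContDiffAt 𝕜 2 f x)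
    (hg : ContDiffAt 𝕜 2 g x) :
    deriv (deriv (f * g)) x =
      deriv (deriv f) x * g x + 2 * deriv f x * deriv g x + f x * deriv (deriv g) x := by
  have leibniz := iteratedDeriv_mul hf hg
  simp only [Finset.sum_range_succ, Finset.range_zero, Finset.sum_empty, Nat.choose_zero_right,
    Nat.choose_one_right, Nat.choose_self, Nat.cast_one, Nat.cast_ofNat, Nat.sub_zero,
    Nat.sub_self, Nat.add_one_sub_one, iteratedDeriv_succ, iteratedDeriv_zero] at leibniz
  rw [leibniz]
  ring

theorem deriv_deriv_add {f g : 𝕜 → 𝔸} {x : 𝕜} (hf : ContDiffAt 𝕜 2 f x)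
    (hg : ContDiffAt 𝕜 2 g x) :
    deriv (deriv (f + g)) x = deriv (deriv f) x + deriv (deriv g) x := by
  simpa only [iteratedDeriv_succ, iteratedDeriv_zero] using iteratedDeriv_add hf hg

theorem operatorCommutator_weightedSecondDeriv_mul (w : 𝕜 → 𝔸) {u f : 𝕜 → 𝔸} {x : 𝕜}
    (hu : ContDiffAt 𝕜 2 u x) (hf : ContDiffAt 𝕜 2 f x) :
    operatorCommutator (weightedSecondDeriv w) (u * ·) f x =
      w x * (deriv (deriv u) x * f x + 2 * deriv u x * deriv f x) := by
  simp only [operatorCommutator, weightedSecondDeriv, Pi.sub_apply, Pi.mul_apply,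
    deriv_deriv_mul hu hf]
  ring

theorem operatorCommutator_weightedSecondDeriv_deriv {w f : 𝕜 → 𝔸} {x : 𝕜}
    (hw : DifferentiableAt 𝕜 w x) (hf : DifferentiableAt 𝕜 (deriv (deriv f)) x) :
    operatorCommutator (weightedSecondDeriv w) deriv f x = -(deriv w x * deriv (deriv f) x) := by
  have deriv_weighted : deriv (weightedSecondDeriv w f) x =
      deriv w x * deriv (deriv f) x + w x * deriv (deriv (deriv f)) x := deriv_mul hw hf
  rw [operatorCommutator, Pi.sub_apply, deriv_weighted, weightedSecondDeriv]
  ring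

end WeightedSecondDeriv

section DoubleCommutator

variable {𝕜 𝕜' : Type*} [NontriviallyNormedField 𝕜] [NontriviallyNormedField 𝕜']
  [NormedAlgebra 𝕜 𝕜']

theorem contDiff_logDeriv {n : WithTop ℕ∞} {f : 𝕜 → 𝕜'} (hf : ContDiff 𝕜 (n + 1) f)
    (hf₀ : ∀ x, f x ≠ 0) : ContDiff 𝕜 n (logDeriv f) := by
  rw [logDeriv, div_eq_mul_inv]
  exact hf.deriv'.mul ((hf.of_le le_self_add).inv hf₀)

theorem deriv_const_mul_inv (c : 𝕜') {f : 𝕜 → 𝕜'} {x : 𝕜} (hf : DifferentiableAt 𝕜 f x)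
    (hx : f x ≠ 0) :
    deriv (fun y ↦ c * (f y)⁻¹) x = -(c * (f x)⁻¹ * logDeriv f x) := by
  rw [deriv_const_mul_field, deriv_fun_inv'' hf hx, logDeriv_apply]
  ring

theorem operatorCommutator_inv_deriv_mul (c : 𝕜') {u f : 𝕜 → 𝕜'} {x : 𝕜}
    (hu : ContDiffAt 𝕜 2 u x) (hu' : deriv u x ≠ 0) (hf : ContDiffAt 𝕜 2 f x) :
    operatorCommutator (weightedSecondDeriv fun y ↦ c * (deriv u y)⁻¹) (u * ·) f x =
      c * (logDeriv (deriv u) x * f x + 2 * deriv f x) := by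
  rw [operatorCommutator_weightedSecondDeriv_mul _ hu hf, logDeriv_apply]
  field_simp

theorem operatorCommutator_weightedSecondDeriv_firstOrder (c : 𝕜') {w p f : 𝕜 → 𝕜'} {x : 𝕜}
    (hp : ContDiffAt 𝕜 2 p x) (hf : ContDiffAt 𝕜 3 f x) :
    operatorCommutator (weightedSecondDeriv w) (fun g y ↦ c * (p y * g y + 2 * deriv g y)) f x =
      c * (operatorCommutator (weightedSecondDeriv w) (p * ·) f x
        + 2 * operatorCommutator (weightedSecondDeriv w) deriv f x) := by
  have hf' : ContDiffAt 𝕜 2 (deriv f) x := hf.derivWithin (by norm_num)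
  have hpf : ContDiffAt 𝕜 2 (p * f) x := hp.mul (hf.of_le (by norm_num))
  have second_deriv : deriv (deriv fun y ↦ c * (p y * f y + 2 * deriv f y)) x =
      c * (deriv (deriv (p * f)) x + 2 * deriv (deriv (deriv f)) x) := by
    have add := deriv_deriv_add hpf (contDiffAt_const (c := (2 : 𝕜')).mul hf')
    simp only [deriv_const_mul_field'] at add ⊢
    exact congrArg (c * ·) add
  simp only [operatorCommutator, Pi.sub_apply, weightedSecondDeriv, Pi.mul_apply, second_deriv]
  ring

theorem operatorCommutator_weightedSecondDeriv_firstOrder_of_deriv_eq (c : 𝕜')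
    {w p f : 𝕜 → 𝕜'} {x : 𝕜} (hw : DifferentiableAt 𝕜 w x) (hwp : deriv w x = -(w x * p x))
    (hp : ContDiffAt 𝕜 2 p x) (hf : ContDiffAt 𝕜 3 f x) :
    operatorCommutator (weightedSecondDeriv w) (fun g y ↦ c * (p y * g y + 2 * deriv g y)) f x =
      c * w x * (2 * deriv (fun y ↦ p y * deriv f y) x + deriv (deriv p) x * f x) := by
  have hf' : ContDiffAt 𝕜 2 (deriv f) x := hf.derivWithin (by norm_num)
  have hf'' : ContDiffAt 𝕜 1 (deriv (deriv f)) x := hf'.derivWithin (by norm_num)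
  have deriv_mul_deriv : deriv (fun y ↦ p y * deriv f y) x =
      deriv p x * deriv f x + p x * deriv (deriv f) x :=
    deriv_fun_mul (hp.differentiableAt (by norm_num)) (hf'.differentiableAt (by norm_num))
  rw [operatorCommutator_weightedSecondDeriv_firstOrder c hp hf,
    operatorCommutator_weightedSecondDeriv_mul w hp (hf.of_le (by norm_num)),
    operatorCommutator_weightedSecondDeriv_deriv hw (hf''.differentiableAt (by norm_num)),
    hwp, deriv_mul_deriv]
  ring

theorem operatorCommutator_inv_deriv_operatorCommutator_mul (c : 𝕜') {u f : 𝕜 → 𝕜'}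
    (hu : ContDiff 𝕜 4 u) (hu' : ∀ x, deriv u x ≠ 0) (hf : ContDiff 𝕜 4 f) (x : 𝕜) :
    let H := weightedSecondDeriv fun y ↦ c * (deriv u y)⁻¹
    let p := logDeriv (deriv u)
    operatorCommutator H (operatorCommutator H (u * ·)) f x =
      c * (c * (deriv u x)⁻¹) *
        (2 * deriv (fun y ↦ p y * deriv f y) x + deriv (deriv p) x * f x) := by
  intro H p
  have hDu : ContDiff 𝕜 3 (deriv u) := hu.deriv'
  have hw : ContDiff 𝕜 2 fun y ↦ c * (deriv u y)⁻¹ :=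
    contDiff_const.mul ((hDu.of_le (by norm_num)).inv hu')
  have hHf : ContDiff 𝕜 2 (H f) := by
    have hDf : ContDiff 𝕜 3 (deriv f) := hf.deriv'
    exact hw.mul hDf.deriv'
  have inner_eq {g : 𝕜 → 𝕜'} (hg : ContDiff 𝕜 2 g) :
      operatorCommutator H (u * ·) g = fun y ↦ c * (p y * g y + 2 * deriv g y) :=
    funext fun y ↦ operatorCommutator_inv_deriv_mul c (hu.of_le (by norm_num)).contDiffAt (hu' y)
      hg.contDiffAt
  calc operatorCommutator H (operatorCommutator H (u * ·)) f x
    _ = operatorCommutator H (fun g y ↦ c * (p y * g y + 2 * deriv g y)) f x := by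
      rw [operatorCommutator, inner_eq (hf.of_le (by norm_num)), inner_eq hHf, operatorCommutator]
    _ = _ :=
      operatorCommutator_weightedSecondDeriv_firstOrder_of_deriv_eq c
        (hw.differentiable (by norm_num) x)
        (deriv_const_mul_inv c (hDu.differentiable (by norm_num) x) (hu' x))
        (contDiff_logDeriv hDu hu').contDiffAt (hf.of_le (by norm_num)).contDiffAt

theorem sturm_liouville_form_second_order_general [NeZero (2 : 𝕜')]
    {σ : 𝕜'} (hσ : σ ≠ 0)
    {u : 𝕜 → 𝕜'} (hu : ContDiff 𝕜 4 u) (hu' : ∀ x, deriv u x ≠ 0)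
    {p : 𝕜 → 𝕜'} (hp : ∀ x, p x = deriv (deriv u) x / deriv u x)
    {H : (𝕜 → 𝕜') → 𝕜 → 𝕜'}
    (hH : ∀ f x, H f x = -(σ ^ 2 / 2) * (deriv u x)⁻¹ * deriv (deriv f) x)
    (lam : 𝕜') {ψ : 𝕜 → 𝕜'} (hψ : ContDiff 𝕜 4 ψ) :
    (∀ x, operatorCommutator H (operatorCommutator H (u * ·)) ψ x = lam * ψ x) ↔
      ∀ x, deriv (fun y ↦ p y * deriv ψ y) x + 1 / 2 * deriv (deriv p) x * ψ x
        - 2 * lam / σ ^ 4 * deriv u x * ψ x = 0 := by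
  obtain rfl : p = logDeriv (deriv u) := funext hp
  obtain rfl : H = weightedSecondDeriv fun y ↦ -(σ ^ 2 / 2) * (deriv u y)⁻¹ :=
    funext₂ hH
  refine forall_congr' fun x ↦ ?_
  set p := logDeriv (deriv u)
  set H := weightedSecondDeriv fun y ↦ -(σ ^ 2 / 2) * (deriv u y)⁻¹
  have factorization :
      operatorCommutator H (operatorCommutator H (u * ·)) ψ x - lam * ψ x =
        σ ^ 4 / (2 * deriv u x) *
          (deriv (fun y ↦ p y * deriv ψ y) x + 1 / 2 * deriv (deriv p) x * ψ x
            - 2 * lam / σ ^ 4 * deriv u x * ψ x) := by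
    rw [operatorCommutator_inv_deriv_operatorCommutator_mul _ hu hu' hψ]
    have two_ne : (2 : 𝕜') ≠ 0 := two_ne_zero
    field_simp [hu' x]
    ring
  have factor_ne : σ ^ 4 / (2 * deriv u x) ≠ 0 :=
    div_ne_zero (pow_ne_zero 4 hσ) (mul_ne_zero two_ne_zero (hu' x))
  rw [← sub_eq_zero, factorization, mul_eq_zero, or_iff_right factor_ne]

end DoubleCommutator

theorem deriv_ofReal_comp (f : ℝ → ℝ) :
    deriv (fun x ↦ (f x : ℂ)) = fun x ↦ ((deriv f x : ℝ) : ℂ) := by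
  funext x
  by_cases hf : DifferentiableAt ℝ f x
  · exact hf.hasDerivAt.ofReal_comp.deriv
  · have hfℂ : ¬DifferentiableAt ℝ (fun y ↦ (f y : ℂ)) x := fun h ↦
      hf (Complex.reCLM.differentiableAt.comp x h)
    rw [deriv_zero_of_not_differentiableAt hf, deriv_zero_of_not_differentiableAt hfℂ,
      Complex.ofReal_zero]

/-- Sturm–Liouville form of the second-order eigenvalue problem: with
`Ĥψ = −(σ²/2)(U')⁻¹ψ''` and `p = U''/U'`, a smooth `ψ : ℝ → ℂ` satisfies
`[Ĥ,[Ĥ,M_U]]ψ = λψ` if and only if it satisfies the Sturm–Liouville equation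
`(pψ')' + (1/2)p''ψ − (2λ/σ⁴)U'ψ = 0`. -/
theorem sturm_liouville_form_second_order
    (σ : ℝ) (hσ : 0 < σ)
    (U : ℝ → ℝ) (hU : ContDiff ℝ (⊤ : ℕ∞) U) (hU' : ∀ x : ℝ, 0 < deriv U x)
    (p : ℝ → ℝ) (hp : ∀ x : ℝ, p x = deriv (deriv U) x / deriv U x)
    (Hop : (ℝ → ℂ) → ℝ → ℂ)
    (hHop : ∀ (f : ℝ → ℂ) (x : ℝ),
      Hop f x = -(σ ^ 2 / 2 : ℂ) * (Complex.ofReal (deriv U x))⁻¹ * deriv (deriv f) x)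
    (lam : ℂ) (ψ : ℝ → ℂ) (hψ : ContDiff ℝ (⊤ : ℕ∞) ψ) :
    (∀ x : ℝ,
        Hop (fun y => Hop (fun z => (U z : ℂ) * ψ z) y - (U y : ℂ) * Hop ψ y) x
            - (Hop (fun y => (U y : ℂ) * Hop ψ y) x - (U x : ℂ) * Hop (Hop ψ) x)
          = lam * ψ x) ↔
      (∀ x : ℝ,
        deriv (fun y => (p y : ℂ) * deriv ψ y) x
            + (1 / 2 : ℂ) * Complex.ofReal (deriv (deriv p) x) * ψ x
            - (2 * lam / (σ ^ 4 : ℂ)) * Complex.ofReal (deriv U x) * ψ x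
          = 0) := by
  have hUℂ : ContDiff ℝ 4 fun x ↦ (U x : ℂ) :=
    Complex.ofRealCLM.contDiff.comp (hU.of_le ENat.LEInfty.out)
  have hUℂ' (x : ℝ) : deriv (fun y ↦ (U y : ℂ)) x ≠ 0 := by
    simpa only [deriv_ofReal_comp, Complex.ofReal_ne_zero] using (hU' x).ne'
  have hpℂ (x : ℝ) : (p x : ℂ) =
      deriv (deriv fun y ↦ (U y : ℂ)) x / deriv (fun y ↦ (U y : ℂ)) x := by
    simp only [deriv_ofReal_comp, hp, Complex.ofReal_div]
  simpa only [deriv_ofReal_comp] using! sturm_liouville_form_second_order_general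
    (Complex.ofReal_ne_zero.2 hσ.ne') hUℂ hUℂ' hpℂ
    (by simpa only [deriv_ofReal_comp] using hHop) lam (hψ.of_le ENat.LEInfty.out)
end
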